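/- arXiv:2005.09407 — 3 statements merged into one kernel-verified Lean document; each statement's English description precedes it below -/
import Mathlib

section
/- For each ε ∈ (0,1) there exists a smooth function u : ℝ² → ℝ such that Δu(x,t) = 1 for all (x,t) ∈ [0,1]², and |{(x,t) ∈ [0,1]² : |u(x,t)| ≤ ε}| ≥ 1 − ε. -/
open MeasureTheory Set ENNReal

/-- The Laplacian `Δu = ∂²u/∂x² + ∂²u/∂t²` of a function `u : ℝ² → ℝ`. -/
noncomputable def laplacian2 (u : ℝ × ℝ → ℝ) (z : ℝ × ℝ) : ℝ :=
  iteratedDeriv 2 (fun a => u (a, z.2)) z.1 + iteratedDeriv 2 (fun b => u (z.1, b)) z.2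

/-!
If `X ⊆ ℝ` is compact with dense complement and `T ⊆ ℝ` is compact, then every continuous function
of `x` alone is a uniform limit on `X × T` of complex polynomials in `z = x + it`. Indeed the
complement of `X × T` is connected, so the Banach algebra generated by `z` is closed under inverses;
hence for `c ∉ X` it contains `(1 + exp (-n (z - c)))⁻¹`, whose limit as `n → ∞` is the indicator of
`x > c`, and these indicators separate the points of `X`. Take such an `X` of measure at least
`1 - ε` in `[0, 1]` and subtract from `x² / 2` the real part, which is harmonic, of a polynomial
close to it on `X × [0, 1]`.
-/

open Complex Filter Polynomial Topology
open Algebra (adjoin adjoin_singleton_eq_range_aeval elemental)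
open scoped ContDiff

section Laplacian

variable {u v : ℝ × ℝ → ℝ} {f : ℂ → ℂ}

theorem laplacian2_sub (hu : ContDiff ℝ 2 u) (hv : ContDiff ℝ 2 v) (z : ℝ × ℝ) :
    laplacian2 (u - v) z = laplacian2 u z - laplacian2 v z := by
  have h₁ : iteratedDeriv 2 (fun a => u (a, z.2) - v (a, z.2)) z.1 = _ :=
    iteratedDeriv_fun_sub (by fun_prop) (by fun_prop)
  have h₂ : iteratedDeriv 2 (fun b => u (z.1, b) - v (z.1, b)) z.2 = _ :=
    iteratedDeriv_fun_sub (by fun_prop) (by fun_prop)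
  simp only [laplacian2, Pi.sub_apply, h₁, h₂]
  ring

theorem laplacian2_comp_fst (h : ℝ → ℝ) (z : ℝ × ℝ) :
    laplacian2 (fun w => h w.1) z = iteratedDeriv 2 h z.1 := by
  simp [laplacian2, iteratedDeriv_const]

theorem iteratedDeriv_re_comp_ofReal (hf : Differentiable ℂ f) (n : ℕ) :
    iteratedDeriv n (fun x : ℝ => (f x).re) = fun x : ℝ => (iteratedDeriv n f x).re := by
  induction n with
  | zero => simp
  | succ n ih =>
    ext x
    rw [iteratedDeriv_succ, ih, iteratedDeriv_succ]
    have hfn : Differentiable ℂ (iteratedDeriv n f) :=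
      (hf.contDiff (n := ω)).differentiable_iteratedDeriv n (by simp)
    exact (hfn x).hasDerivAt.real_of_complex.deriv

theorem laplacian2_re_comp_eq_zero (hf : Differentiable ℂ f) (z : ℝ × ℝ) :
    laplacian2 (fun w => (f (w.1 + w.2 * I)).re) z = 0 := by
  have h₁ : iteratedDeriv 2 (fun a : ℝ => (f (a + z.2 * I)).re) z.1 =
      (iteratedDeriv 2 f (z.1 + z.2 * I)).re := by
    rw [iteratedDeriv_re_comp_ofReal (f := fun w => f (w + z.2 * I)) (by fun_prop),
      iteratedDeriv_comp_add_const]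
  have h₂ : iteratedDeriv 2 (fun b : ℝ => (f (z.1 + b * I)).re) z.2 =
      (I ^ 2 * iteratedDeriv 2 f (z.1 + z.2 * I)).re := by
    simp_rw [mul_comm _ I]
    rw [iteratedDeriv_re_comp_ofReal (f := fun w => f (z.1 + I * w)) (by fun_prop),
      iteratedDeriv_comp_const_mul (f := fun w => f (z.1 + w))
        (Differentiable.contDiff (by fun_prop)), iteratedDeriv_comp_const_add]
  simp [laplacian2, h₁, h₂]

theorem contDiff_re_comp (hf : Differentiable ℂ f) {n : ℕ∞ω} :
    ContDiff ℝ n (fun w : ℝ × ℝ => (f (w.1 + w.2 * I)).re) :=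
  reCLM.contDiff.comp <| (hf.contDiff.restrict_scalars ℝ).comp <|
    (ofRealCLM.contDiff.comp contDiff_fst).add <|
      (ofRealCLM.contDiff.comp contDiff_snd).mul contDiff_const

end Laplacian

section Preconnected

theorem isPreconnected_compl_prod {α β : Type*} [TopologicalSpace α] [TopologicalSpace β]
    [PreconnectedSpace α] [PreconnectedSpace β] {s : Set α} {t : Set β} (hs : sᶜ.Nonempty)
    (ht : tᶜ.Nonempty) : IsPreconnected (s ×ˢ t)ᶜ := by
  obtain ⟨a, ha⟩ := hs
  obtain ⟨b, hb⟩ := ht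
  have cross (x : α) (y : β) : IsPreconnected ({x} ×ˢ univ ∪ univ ×ˢ {y} : Set (α × β)) :=
    (isPreconnected_singleton.prod isPreconnected_univ).union (x, y) (by simp) (by simp)
      (isPreconnected_univ.prod isPreconnected_singleton)
  refine isPreconnected_of_forall (a, b) fun ⟨x, y⟩ hxy => ?_
  obtain hx | hy : x ∉ s ∨ y ∉ t := by simpa [imp_iff_not_or] using hxy
  · refine ⟨_, ?_, by simp, by simp, cross x b⟩
    rintro ⟨x', y'⟩ (h | h) <;> simp_all
  · refine ⟨_, ?_, by simp, by simp, cross a y⟩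
    rintro ⟨x', y'⟩ (h | h) <;> simp_all

theorem isPreconnected_compl_reProdIm {s t : Set ℝ} (hs : sᶜ.Nonempty) (ht : tᶜ.Nonempty) :
    IsPreconnected (s ×ℂ t)ᶜ :=
  equivRealProdCLM.toHomeomorph.isPreconnected_preimage.2 (isPreconnected_compl_prod hs ht)

end Preconnected

section Elemental

theorem denseRange_aeval_elemental {R A : Type*} [CommSemiring R] [Semiring A]
    [TopologicalSpace A] [IsSemitopologicalSemiring A] [Algebra R A] (a : A) :
    DenseRange (aeval (R := R) (⟨a, elemental.self_mem R a⟩ : elemental R a)) := by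
  intro b
  rw [closure_subtype, ← range_comp]
  have hrange : range ((↑) ∘ aeval (R := R) (⟨a, elemental.self_mem R a⟩ : elemental R a)) =
      (adjoin R {a} : Set A) := by
    ext c
    simp [adjoin_singleton_eq_range_aeval]
  rw [hrange]
  exact b.2

theorem isUnit_elemental_of_isUnit {A : Type*} [NormedRing A] [NormedAlgebra ℂ A]
    [CompleteSpace A] {a : A} (ha : IsPreconnected (spectrum ℂ a)ᶜ) {b : elemental ℂ a}
    (hb : IsUnit (b : A)) : IsUnit b := by
  let _ : NormedCommRing (elemental ℂ a) :=
    { (inferInstance : NormedRing (elemental ℂ a)) with mul_comm := mul_comm }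
  by_contra hb'
  obtain ⟨φ, hφ⟩ := WeakDual.CharacterSpace.exists_apply_eq_zero hb'
  let a' : elemental ℂ a := ⟨a, elemental.self_mem ℂ a⟩
  have hφa : φ a' ∈ spectrum ℂ a := by
    rw [← Subalgebra.spectrum_eq_of_isPreconnected_compl (elemental ℂ a) a' ha]
    exact WeakDual.CharacterSpace.mem_spectrum_iff_exists.2 ⟨φ, rfl⟩
  have hmem (c : elemental ℂ a) : algebraMap ℂ A (φ c) - c ∈ nonunits A := by
    induction c using (denseRange_aeval_elemental (R := ℂ) a).induction_on with
    | hp => exact nonunits.isClosed.preimage (by fun_prop)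
    | ih p =>
      have hp : p.eval (φ a') ∈ spectrum ℂ (aeval a p) :=
        spectrum.subset_polynomial_aeval a p ⟨_, hφa, rfl⟩
      rwa [← coe_aeval_eq_eval, aeval_algHom_apply, ← aeval_subalgebra_coe p _ a'] at hp
  exact hmem b (by simpa [hφ] using hb)

end Elemental

section Sigmoid

variable {w : ℂ} {d : ℝ}

theorem norm_inv_one_add_exp_le (hd : 0 < d) (hw : d ≤ w.re) :
    ‖(1 + exp w)⁻¹‖ ≤ (Real.exp d - 1)⁻¹ := by
  rw [norm_inv]
  refine inv_anti₀ (by simpa using hd) ?_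
  calc Real.exp d - 1 ≤ ‖exp w‖ - ‖(1 : ℂ)‖ := by rw [norm_exp, norm_one]; gcongr
    _ ≤ ‖exp w + 1‖ := norm_sub_le_norm_add _ _
    _ = ‖1 + exp w‖ := by rw [add_comm]

theorem one_add_exp_ne_zero (hw : w.re ≠ 0) : 1 + exp w ≠ 0 := by
  intro h
  have hnorm : Real.exp w.re = 1 := by
    rw [← norm_exp, eq_neg_of_add_eq_zero_right h, norm_neg, norm_one]
  exact hw (Real.exp_eq_one_iff _ |>.1 hnorm)

theorem norm_inv_one_add_exp_neg_sub_ite_le (hd : 0 < d) (hw : d ≤ |w.re|) :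
    ‖(1 + exp (-w))⁻¹ - if 0 < w.re then 1 else 0‖ ≤ (Real.exp d - 1)⁻¹ := by
  split_ifs with h
  · rw [abs_of_pos h] at hw
    have hflip : (1 + exp (-w))⁻¹ - 1 = -(1 + exp w)⁻¹ := by
      have h₀ : 1 + exp w ≠ 0 := one_add_exp_ne_zero h.ne'
      have h₁ : exp w + 1 ≠ 0 := by rwa [add_comm]
      rw [exp_neg]
      field_simp [exp_ne_zero w]
      ring
    rw [hflip, norm_neg]
    exact norm_inv_one_add_exp_le hd hw
  · rw [abs_of_nonpos (not_lt.1 h)] at hw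
    rw [sub_zero]
    exact norm_inv_one_add_exp_le hd hw

end Sigmoid

section ContinuousMap

variable {Y : Type*} [TopologicalSpace Y] [CompactSpace Y] {a b : C(Y, ℂ)}

theorem exists_mem_elemental_apply_eq_inv (ha : IsPreconnected (range a)ᶜ)
    (hb : b ∈ elemental ℂ a) (hb₀ : ∀ y, b y ≠ 0) :
    ∃ f ∈ elemental ℂ a, ∀ y, f y = (b y)⁻¹ := by
  have hunit : IsUnit (⟨b, hb⟩ : elemental ℂ a) :=
    isUnit_elemental_of_isUnit (by rwa [ContinuousMap.spectrum_eq_range])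
      (b.isUnit_iff_forall_ne_zero.2 hb₀)
  obtain ⟨f, hf⟩ := hunit.exists_left_inv
  exact ⟨f, f.2, fun y =>
    eq_inv_of_mul_eq_one_left (DFunLike.congr_fun (congrArg Subtype.val hf) y)⟩

theorem exists_mem_elemental_apply_eq_inv_one_add_exp (ha : IsPreconnected (range a)ᶜ)
    (hb : b ∈ elemental ℂ a) (hb₀ : ∀ y, (b y).re ≠ 0) :
    ∃ f ∈ elemental ℂ a, ∀ y, f y = (1 + exp (b y))⁻¹ := by
  have hexp (y : Y) : (1 + NormedSpace.exp b) y = 1 + exp (b y) := by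
    simp [NormedSpace.exp_continuousMap_eq, exp_eq_exp_ℂ]
  have hmem : 1 + NormedSpace.exp b ∈ elemental ℂ a :=
    add_mem (one_mem _) (NormedSpace.exp_mem (R := ℂ) (elemental.isClosed ℂ a) hb)
  obtain ⟨f, hf, hfy⟩ := exists_mem_elemental_apply_eq_inv ha hmem fun y =>
    hexp y ▸ one_add_exp_ne_zero (hb₀ y)
  exact ⟨f, hf, fun y => by rw [hfy, hexp]⟩

theorem mem_elemental_of_apply_eq_ite {χ : C(Y, ℂ)} (ha : IsPreconnected (range a)ᶜ)
    (hb : b ∈ elemental ℂ a) (hb₀ : ∀ y, (b y).re ≠ 0)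
    (hχ : ∀ y, χ y = if 0 < (b y).re then 1 else 0) : χ ∈ elemental ℂ a := by
  obtain ⟨d, hd, hbd⟩ : ∃ d, 0 < d ∧ ∀ y ∈ univ, d ≤ |(b y).re| :=
    isCompact_univ.exists_forall_le' (by fun_prop) fun y _ => abs_pos.2 (hb₀ y)
  have happrox (n : ℕ) (hn : n ≠ 0) :
      ∃ f ∈ elemental ℂ a, ‖χ - f‖ ≤ (Real.exp (n * d) - 1)⁻¹ := by
    have hn' : (0 : ℝ) < n := by positivity
    obtain ⟨f, hf, hfy⟩ := exists_mem_elemental_apply_eq_inv_one_add_exp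
      (b := -((n : ℂ) • b)) ha (neg_mem ((elemental ℂ a).smul_mem hb n)) (by simp [hn, hb₀])
    refine ⟨f, hf, (ContinuousMap.norm_le _ ?_).2 fun y => ?_⟩
    · have := Real.one_lt_exp_iff.2 (mul_pos hn' hd)
      exact inv_nonneg.2 (by linarith)
    · have hbound := norm_inv_one_add_exp_neg_sub_ite_le (w := n * b y) (mul_pos hn' hd)
        (by simpa [abs_mul] using mul_le_mul_of_nonneg_left (hbd y trivial) hn'.le)
      simpa [hχ, hfy, norm_sub_rev, hn'] using hbound
  have hlim : Tendsto (fun n : ℕ => (Real.exp (n * d) - 1)⁻¹) atTop (𝓝 0) :=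
    (tendsto_atTop_add_const_right _ _ <| Real.tendsto_exp_atTop.comp <|
      tendsto_natCast_atTop_atTop.atTop_mul_const hd).inv_tendsto_atTop
  rw [← SetLike.mem_coe, ← (elemental.isClosed ℂ a).closure_eq, Metric.mem_closure_iff]
  intro r hr
  obtain ⟨n, hnr, hn⟩ := ((hlim.eventually_lt_const hr).and (eventually_ne_atTop 0)).exists
  obtain ⟨f, hf, hfn⟩ := happrox n hn
  exact ⟨f, hf, (dist_eq_norm χ f).trans_lt (hfn.trans_lt hnr)⟩

theorem ofReal_comp_mem_elemental {X : Set ℝ} [CompactSpace X] (hX : Dense Xᶜ)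
    (ha : IsPreconnected (range a)ᶜ) (hb : b ∈ elemental ℂ a) {q : C(Y, X)}
    (hq : ∀ y, (b y).re = q y) (g : C(X, ℝ)) :
    (⟨fun y => (g (q y) : ℂ), by fun_prop⟩ : C(Y, ℂ)) ∈ elemental ℂ a := by
  let Φ : C(X, ℝ) →ₐ[ℝ] C(Y, ℂ) :=
    (ofRealAm.compLeftContinuous ℝ Complex.continuous_ofReal).comp
      (ContinuousMap.compRightAlgHom ℝ ℝ q)
  have hΦ : Continuous Φ :=
    (ContinuousMap.continuous_postcomp ⟨_, Complex.continuous_ofReal⟩).comp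
      (ContinuousMap.continuous_precomp q)
  let B : Subalgebra ℝ C(X, ℝ) := ((elemental ℂ a).restrictScalars ℝ).comap Φ
  have hB : IsClosed (B : Set C(X, ℝ)) := (elemental.isClosed ℂ a).preimage hΦ
  have hind (c : ℝ) (hc : c ∉ X) : ∃ f ∈ B, ∀ x : X, f x = if c < x then 1 else 0 := by
    have hne (x : X) : (x : ℝ) ≠ c := fun h => hc (h ▸ x.2)
    have hcont : Continuous fun x : X => if c < x then (1 : ℝ) else 0 := by
      refine continuous_const.if (fun x hx => ?_) continuous_const
      exact absurd (frontier_lt_subset_eq continuous_const continuous_subtype_val hx).symm (hne x)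
    refine ⟨⟨_, hcont⟩, mem_elemental_of_apply_eq_ite (b := b - algebraMap ℂ _ (c : ℂ)) ha
      (sub_mem hb (Subalgebra.algebraMap_mem _ _)) (fun y => ?_) (fun y => ?_), fun _ => rfl⟩
    · simpa [hq, sub_eq_zero] using hne (q y)
    · change ((if c < q y then (1 : ℝ) else 0 : ℝ) : ℂ) = _
      simp [hq, apply_ite]
  have hsep : B.SeparatesPoints := by
    intro x x' hxx'
    wlog hlt : x < x' generalizing x x'
    · obtain ⟨f, hf, hne⟩ := this hxx'.symm (hxx'.lt_or_gt.resolve_left hlt)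
      exact ⟨f, hf, hne.symm⟩
    obtain ⟨c, hc, hxc, hcx'⟩ := hX.exists_between hlt
    obtain ⟨f, hf, hfx⟩ := hind c hc
    exact ⟨f, mem_image_of_mem _ hf, by simp [hfx, hcx', hxc.le.not_gt]⟩
  have htop : B = ⊤ := by
    rw [← ContinuousMap.subalgebra_topologicalClosure_eq_top_of_separatesPoints B hsep]
    exact (SetLike.coe_injective hB.closure_eq).symm
  have hg : g ∈ B := htop ▸ Algebra.mem_top
  exact hg

end ContinuousMap

theorem exists_polynomial_norm_eval_sub_lt {X T : Set ℝ} (hX : IsCompact X) (hXd : Dense Xᶜ)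
    (hT : IsCompact T) {g : ℝ → ℝ} (hg : ContinuousOn g X) {ε : ℝ} (hε : 0 < ε) :
    ∃ p : ℂ[X], ∀ x ∈ X, ∀ t ∈ T, ‖p.eval (x + t * I : ℂ) - g x‖ < ε := by
  have : CompactSpace X := isCompact_iff_compactSpace.1 hX
  have : CompactSpace ↥(X ×ℂ T) := isCompact_iff_compactSpace.1 (hX.reProdIm hT)
  let a : C(↥(X ×ℂ T), ℂ) := .restrict _ (.id ℂ)
  have ha : IsPreconnected (range a)ᶜ := by
    have hrange : range a = X ×ℂ T := Subtype.range_coe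
    rw [hrange]
    exact isPreconnected_compl_reProdIm hXd.nonempty (nonempty_compl.2 hT.ne_univ)
  let q : C(↥(X ×ℂ T), X) := ⟨fun z => ⟨re z, z.2.1⟩, by fun_prop⟩
  let G : C(↥(X ×ℂ T), ℂ) := ⟨fun z => (X.domRestrict g (q z) : ℂ), by
    have := hg.domRestrict
    fun_prop⟩
  have hG : G ∈ elemental ℂ a := ofReal_comp_mem_elemental hXd ha (elemental.self_mem ℂ a)
    (fun _ => rfl) ⟨_, hg.domRestrict⟩
  obtain ⟨p, hp⟩ := (denseRange_aeval_elemental a).exists_dist_lt ⟨G, hG⟩ hε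
  refine ⟨p, fun x hx t ht => ?_⟩
  let z : ↥(X ×ℂ T) := ⟨x + t * I, by simpa [mem_reProdIm] using ⟨hx, ht⟩⟩
  calc ‖p.eval (x + t * I : ℂ) - g x‖
      = dist (G z) (aeval a p z) := by
        rw [dist_eq_norm', aeval_continuousMap_apply]
        simp [a, G, q, z]
    _ ≤ dist G (aeval a p) := ContinuousMap.dist_apply_le_dist z
    _ < ε := by rwa [← aeval_subalgebra_coe p _ ⟨a, elemental.self_mem ℂ a⟩]

theorem exists_contDiff_laplacian2_eq_iteratedDeriv_abs_lt {X T : Set ℝ} (hX : IsCompact X)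
    (hXd : Dense Xᶜ) (hT : IsCompact T) {h : ℝ → ℝ} {n : ℕ∞ω} (hn : 2 ≤ n)
    (hh : ContDiff ℝ n h) {ε : ℝ} (hε : 0 < ε) :
    ∃ u : ℝ × ℝ → ℝ, ContDiff ℝ n u ∧ (∀ z, laplacian2 u z = iteratedDeriv 2 h z.1) ∧
      ∀ z ∈ X ×ˢ T, |u z| < ε := by
  obtain ⟨p, hp⟩ := exists_polynomial_norm_eval_sub_lt hX hXd hT hh.continuous.continuousOn hε
  have hfst : ContDiff ℝ n fun z : ℝ × ℝ => h z.1 := hh.comp contDiff_fst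
  refine ⟨(fun z => h z.1) - fun z => (p.eval (z.1 + z.2 * I : ℂ)).re,
    hfst.sub (contDiff_re_comp p.differentiable), fun z => ?_, fun z hz => ?_⟩
  · rw [laplacian2_sub (hfst.of_le hn) (contDiff_re_comp p.differentiable), laplacian2_comp_fst,
      laplacian2_re_comp_eq_zero p.differentiable, sub_zero]
  · calc |h z.1 - (p.eval (z.1 + z.2 * I : ℂ)).re|
        = |(p.eval (z.1 + z.2 * I : ℂ) - h z.1).re| := by rw [abs_sub_comm, sub_re, ofReal_re]
      _ ≤ ‖p.eval (z.1 + z.2 * I : ℂ) - h z.1‖ := abs_re_le_norm _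
      _ < ε := hp _ hz.1 _ hz.2

theorem exists_isCompact_subset_dense_compl_measure_le_add {α : Type*} [TopologicalSpace α]
    [TopologicalSpace.SeparableSpace α] [MeasurableSpace α] (μ : Measure α) [NullSingletonClass μ]
    [μ.OuterRegular] {K : Set α} (hK : IsCompact K) {ε : ℝ≥0∞} (hε : ε ≠ 0) :
    ∃ X ⊆ K, IsCompact X ∧ Dense Xᶜ ∧ μ K ≤ μ X + ε := by
  obtain ⟨D, hDc, hD⟩ := TopologicalSpace.exists_countable_dense α
  obtain ⟨U, hDU, hU, hμU⟩ := D.exists_isOpen_lt_of_lt (μ := μ) ε <| by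
    rw [hDc.measure_zero μ]
    exact hε.bot_lt
  refine ⟨K \ U, sdiff_subset, hK.diff hU, hD.mono fun x hx hxU => hxU.2 (hDU hx), ?_⟩
  calc μ K ≤ μ (K ∩ U) + μ (K \ U) := measure_le_inter_add_sdiff μ K U
    _ ≤ ε + μ (K \ U) := by grw [inter_subset_right, hμU]
    _ = μ (K \ U) + ε := add_comm _ _

/-- Carbery–Christ–Wright counterexample for the Laplacian. For each
`ε ∈ (0,1)` there is a smooth `u : ℝ² → ℝ` with `Δu ≡ 1` on the unit square `[0,1]²` and
`|{(x,t) ∈ [0,1]² : |u(x,t)| ≤ ε}| ≥ 1 − ε`. -/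
theorem laplacian_no_uniform_sublevel (ε : ℝ) (hε : ε ∈ Set.Ioo (0 : ℝ) 1) :
    ∃ u : ℝ × ℝ → ℝ, ContDiff ℝ (⊤ : ℕ∞) u ∧
      (∀ z ∈ (Set.Icc (0 : ℝ) 1) ×ˢ (Set.Icc (0 : ℝ) 1), laplacian2 u z = 1) ∧
      ENNReal.ofReal (1 - ε) ≤
        volume {z ∈ (Set.Icc (0 : ℝ) 1) ×ˢ (Set.Icc (0 : ℝ) 1) | |u z| ≤ ε} := by
  obtain ⟨X, hXI, hX, hXd, hvol⟩ := exists_isCompact_subset_dense_compl_measure_le_add volume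
    (isCompact_Icc (a := (0 : ℝ)) (b := 1)) (ENNReal.ofReal_pos.2 hε.1).ne'
  have hsq : ContDiff ℝ (⊤ : ℕ∞) fun x : ℝ => x ^ 2 / 2 := by fun_prop
  obtain ⟨u, hu, hΔu, hu_lt⟩ := exists_contDiff_laplacian2_eq_iteratedDeriv_abs_lt hX hXd
    (isCompact_Icc (a := (0 : ℝ)) (b := 1)) (by norm_cast) hsq hε.1
  refine ⟨u, hu, fun z _ => ?_, ?_⟩
  · rw [hΔu, iteratedDeriv_div_const, iteratedDeriv_pow]
    norm_num [Nat.descFactorial]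
  · calc ENNReal.ofReal (1 - ε) = volume (Icc (0 : ℝ) 1) - ENNReal.ofReal ε := by
          rw [ENNReal.ofReal_sub _ hε.1.le, Real.volume_Icc, sub_zero]
      _ ≤ volume X := tsub_le_iff_right.2 hvol
      _ = volume (X ×ˢ Icc (0 : ℝ) 1) := by simp [Measure.volume_eq_prod]
      _ ≤ _ := by exact measure_mono fun z hz => ⟨⟨hXI hz.1, hz.2⟩, (hu_lt z hz).le⟩
end

section
/- For each ε ∈ (0,1) there exists a smooth function u : ℝ² → ℝ such that Hu(x,t) = 1 for all (x,t) ∈ [0,1]², where H = ∂²/∂x² − ∂/∂t is the one-spatial-dimensional heat operator, and |{(x,t) ∈ [0,1]² : |u(x,t)| ≤ ε}| ≥ 1 − ε. -/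
open MeasureTheory Set ENNReal

/-- The one-spatial-dimensional heat operator `Hu = ∂²u/∂x² − ∂u/∂t` for `u : ℝ² → ℝ`,
where points are written `(x,t)`. -/
noncomputable def heatOp1 (u : ℝ × ℝ → ℝ) (z : ℝ × ℝ) : ℝ :=
  iteratedDeriv 2 (fun a => u (a, z.2)) z.1 - deriv (fun b => u (z.1, b)) z.2

/-!
A polynomial `p` in time extends to the caloric function `∑ p⁽ᵏ⁾(t) x²ᵏ / (2k)!`, and by Cauchy's
estimates this extension stays near a constant `c` at `(x, t)` as soon as `p` is near `c` on a
*complex* disc around `t`. So it suffices to approximate a fine staircase `c(t) ≈ t`, uniformly on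
complex discs of a fixed radius away from the jumps: then `u = (caloric extension) - t` satisfies
`Hu = 1` and is small off a thin set of times. A single step is approximated by the probability
that `2n + 1` tosses of a coin with bias `z` have a majority of heads; its error is governed by
`|4z(1 - z)|ⁿ`, which decays in a complex neighbourhood of any compact subset of
`[0, 1] \ {1/2}`.
-/

section

open Polynomial

theorem heatOp1_sub {u v : ℝ × ℝ → ℝ} (hu : ContDiff ℝ 2 u) (hv : ContDiff ℝ 2 v) (z : ℝ × ℝ) :
    heatOp1 (fun w => u w - v w) z = heatOp1 u z - heatOp1 v z := by
  have slice_fst {f : ℝ × ℝ → ℝ} (hf : ContDiff ℝ 2 f) :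
      ContDiff ℝ 2 fun a => f (a, z.2) := hf.comp (contDiff_prodMk_left _)
  have slice_snd {f : ℝ × ℝ → ℝ} (hf : ContDiff ℝ 2 f) :
      Differentiable ℝ fun b => f (z.1, b) :=
    (hf.comp (contDiff_prodMk_right _)).differentiable two_ne_zero
  rw [heatOp1, iteratedDeriv_fun_sub (slice_fst hu).contDiffAt (slice_fst hv).contDiffAt,
    deriv_fun_sub (slice_snd hu _) (slice_snd hv _), heatOp1, heatOp1]
  ring

theorem heatOp1_snd (z : ℝ × ℝ) : heatOp1 Prod.snd z = -1 := by
  simp [heatOp1, iteratedDeriv_const]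

/-- The caloric extension `∑ₖ p⁽ᵏ⁾(t) x²ᵏ / (2k)!` of a polynomial `p` in time: the solution of
the heat equation with `u(0, t) = p(t)` and `∂u/∂x (0, t) = 0`. -/
noncomputable def caloricExtension (p : ℝ[X]) (z : ℝ × ℝ) : ℝ :=
  ∑ k ∈ Finset.range (p.natDegree + 1),
    (derivative^[k] p).eval z.2 * (z.1 ^ (2 * k) / (2 * k).factorial)

theorem contDiff_caloricExtension (p : ℝ[X]) {n : WithTop ℕ∞} :
    ContDiff ℝ n (caloricExtension p) := by
  refine ContDiff.sum fun k _ => ContDiff.mul ?_ ((contDiff_fst.pow _).div_const _)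
  exact (Polynomial.contDiff_aeval (𝕜 := ℝ) _ _).comp contDiff_snd

theorem hasDerivAt_pow_div_factorial (k : ℕ) (x : ℝ) :
    HasDerivAt (fun y : ℝ => y ^ (k + 1) / (k + 1).factorial) (x ^ k / k.factorial) x := by
  refine ((hasDerivAt_pow (k + 1) x).div_const _).congr_deriv ?_
  rw [Nat.factorial_succ, Nat.cast_mul, Nat.add_sub_cancel, mul_div_mul_left _ _ (by positivity)]

theorem deriv_caloricExtension_snd (p : ℝ[X]) (x t : ℝ) :
    deriv (fun b => caloricExtension p (x, b)) t =
      ∑ k ∈ Finset.range p.natDegree,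
        (derivative^[k + 1] p).eval t * (x ^ (2 * k) / (2 * k).factorial) := by
  have hderiv : HasDerivAt (fun b => caloricExtension p (x, b))
      (∑ k ∈ Finset.range (p.natDegree + 1),
        (derivative^[k + 1] p).eval t * (x ^ (2 * k) / (2 * k).factorial)) t := by
    refine HasDerivAt.fun_sum fun k _ => ?_
    rw [Function.iterate_succ_apply']
    exact ((derivative^[k] p).hasDerivAt t).mul_const (x ^ (2 * k) / (2 * k).factorial : ℝ)
  rw [hderiv.deriv, Finset.sum_range_succ,
    iterate_derivative_eq_zero (Nat.lt_succ_self _), eval_zero, zero_mul, add_zero]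

theorem iteratedDeriv_two_caloricExtension_fst (p : ℝ[X]) (x t : ℝ) :
    iteratedDeriv 2 (fun a => caloricExtension p (a, t)) x =
      ∑ k ∈ Finset.range p.natDegree,
        (derivative^[k + 1] p).eval t * (x ^ (2 * k) / (2 * k).factorial) := by
  have hfirst : deriv (fun a => caloricExtension p (a, t)) = fun a =>
      ∑ k ∈ Finset.range p.natDegree,
        (derivative^[k + 1] p).eval t * (a ^ (2 * k + 1) / (2 * k + 1).factorial) := by
    funext a
    simp only [caloricExtension, Finset.sum_range_succ' _ p.natDegree, mul_zero, pow_zero]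
    exact ((HasDerivAt.fun_sum fun k _ =>
      (hasDerivAt_pow_div_factorial (2 * k + 1) a).const_mul _).add_const _).deriv
  rw [iteratedDeriv_succ, iteratedDeriv_one, hfirst]
  exact (HasDerivAt.fun_sum fun k _ =>
    (hasDerivAt_pow_div_factorial (2 * k) x).const_mul _).deriv

theorem heatOp1_caloricExtension (p : ℝ[X]) (z : ℝ × ℝ) : heatOp1 (caloricExtension p) z = 0 := by
  rw [heatOp1, iteratedDeriv_two_caloricExtension_fst, deriv_caloricExtension_snd, sub_self]

theorem heatOp1_caloricExtension_sub_snd (p : ℝ[X]) (z : ℝ × ℝ) :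
    heatOp1 (fun w => caloricExtension p w - w.2) z = 1 := by
  rw [heatOp1_sub (contDiff_caloricExtension p) contDiff_snd, heatOp1_caloricExtension,
    heatOp1_snd, sub_neg_eq_add, zero_add]

theorem caloricExtension_sub_C (p : ℝ[X]) (c : ℝ) (z : ℝ × ℝ) :
    caloricExtension (p - C c) z = caloricExtension p z - c := by
  have hderiv (k : ℕ) : derivative^[k + 1] (p - C c) = derivative^[k + 1] p := by
    rw [iterate_derivative_sub, iterate_derivative_C k.succ_pos, sub_zero]
  simp only [caloricExtension, natDegree_sub_C, Finset.sum_range_succ', hderiv,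
    Function.iterate_zero_apply, eval_sub, eval_C, mul_zero, pow_zero, Nat.factorial_zero,
    Nat.cast_one, div_one, mul_one]
  ring

theorem iteratedDeriv_aeval (p : ℝ[X]) (k : ℕ) :
    iteratedDeriv k (fun z : ℂ => aeval z p) = fun z => aeval z (derivative^[k] p) := by
  induction k with
  | zero => simp
  | succ k ih =>
    funext z
    rw [iteratedDeriv_succ, ih, Polynomial.deriv_aeval, Function.iterate_succ_apply']

theorem abs_eval_iterate_derivative_le {p : ℝ[X]} {t r M : ℝ} (hr : 0 < r)
    (hp : ∀ z : ℂ, ‖z - t‖ ≤ r → ‖aeval z p‖ ≤ M) (k : ℕ) :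
    |(derivative^[k] p).eval t| ≤ k.factorial * M / r ^ k := by
  have hcauchy := Complex.norm_iteratedDeriv_le_of_forall_mem_sphere_norm_le (c := (t : ℂ)) k hr
    (Polynomial.differentiable_aeval p).diffContOnCl
    fun z hz => hp z (mem_sphere_iff_norm.1 hz).le
  have hreal : aeval (t : ℂ) (derivative^[k] p) = ((derivative^[k] p).eval t : ℝ) := by
    simpa using aeval_algebraMap_apply ℂ t (derivative^[k] p)
  simpa only [iteratedDeriv_aeval, hreal, Complex.norm_real, Real.norm_eq_abs] using hcauchy

theorem abs_caloricExtension_le {p : ℝ[X]} {t r M : ℝ} (hr : 0 < r)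
    (hp : ∀ z : ℂ, ‖z - t‖ ≤ r → ‖aeval z p‖ ≤ M) (x : ℝ) :
    |caloricExtension p (x, t)| ≤ M * Real.exp (x ^ 2 / r) := by
  have hM : 0 ≤ M := (norm_nonneg _).trans (hp t (by simpa using hr.le))
  have hfactorial (k : ℕ) : (k.factorial * k.factorial : ℝ) ≤ (2 * k).factorial := by
    rw [two_mul]
    exact_mod_cast Nat.le_of_dvd (Nat.factorial_pos _)
      (Nat.factorial_mul_factorial_dvd_factorial_add k k)
  have hterm (k : ℕ) : |(derivative^[k] p).eval t * (x ^ (2 * k) / (2 * k).factorial)| ≤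
      M * ((x ^ 2 / r) ^ k / k.factorial) :=
    calc |(derivative^[k] p).eval t * (x ^ (2 * k) / (2 * k).factorial)|
        = |(derivative^[k] p).eval t| * ((x ^ 2) ^ k / (2 * k).factorial) := by
          rw [abs_mul, pow_mul, abs_of_nonneg (a := (x ^ 2) ^ k / _) (by positivity)]
      _ ≤ k.factorial * M / r ^ k * ((x ^ 2) ^ k / (k.factorial * k.factorial)) := by
          gcongr
          exacts [abs_eval_iterate_derivative_le hr hp k, hfactorial k]
      _ = M * ((x ^ 2 / r) ^ k / k.factorial) := by
          rw [div_pow]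
          field_simp
  calc |caloricExtension p (x, t)|
      ≤ ∑ k ∈ Finset.range (p.natDegree + 1), M * ((x ^ 2 / r) ^ k / k.factorial) :=
        (Finset.abs_sum_le_sum_abs _ _).trans (Finset.sum_le_sum fun k _ => hterm k)
    _ ≤ M * Real.exp (x ^ 2 / r) := by
        rw [← Finset.mul_sum]
        gcongr
        exact Real.sum_le_exp_of_nonneg (by positivity) _

theorem abs_caloricExtension_sub_le {p : ℝ[X]} {c t r M : ℝ} (hr : 0 < r)
    (hp : ∀ z : ℂ, ‖z - t‖ ≤ r → ‖aeval z p - c‖ ≤ M) (x : ℝ) :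
    |caloricExtension p (x, t) - c| ≤ M * Real.exp (x ^ 2 / r) := by
  rw [← caloricExtension_sub_C]
  refine abs_caloricExtension_le hr (fun z hz => ?_) x
  simpa using hp z hz

/-- The probability, as a polynomial in the bias of the coin, that `2n + 1` independent tosses
have a majority of heads. The index `ν` is the number of tails. Equivalently, this is the Bernstein
approximation of degree `2n + 1` to the step function jumping from `0` to `1` at `1/2`. -/
noncomputable def majorityPolynomial (n : ℕ) : ℝ[X] :=
  ∑ ν ∈ Finset.range (n + 1), bernsteinPolynomial ℝ (2 * n + 1) (2 * n + 1 - ν)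

theorem majorityPolynomial_add_comp_one_sub (n : ℕ) :
    majorityPolynomial n + (majorityPolynomial n).comp (1 - X) = 1 := by
  have hflip : (majorityPolynomial n).comp (1 - X) =
      ∑ ν ∈ Finset.range (n + 1), bernsteinPolynomial ℝ (2 * n + 1) ν := by
    rw [majorityPolynomial, Polynomial.sum_comp]
    refine Finset.sum_congr rfl fun ν hν => ?_
    rw [← bernsteinPolynomial.flip' _ _ _ (by grind)]
  have hupper : majorityPolynomial n =
      ∑ ν ∈ Finset.range (n + 1), bernsteinPolynomial ℝ (2 * n + 1) (n + 1 + ν) := by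
    rw [majorityPolynomial, ← Finset.sum_range_reflect]
    refine Finset.sum_congr rfl fun ν hν => ?_
    congr 1
    grind
  rw [hflip, hupper, add_comm, ← Finset.sum_range_add, ← bernsteinPolynomial.sum ℝ (2 * n + 1)]
  congr 2
  ring

theorem aeval_majorityPolynomial (n : ℕ) (z : ℂ) :
    aeval z (majorityPolynomial n) = z * ∑ ν ∈ Finset.range (n + 1),
      ((2 * n + 1).choose ν : ℂ) * (z ^ n * (z ^ (n - ν) * (1 - z) ^ ν)) := by
  rw [majorityPolynomial, map_sum, Finset.mul_sum]
  refine Finset.sum_congr rfl fun ν hν => ?_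
  have hν : ν ≤ n := Finset.mem_range_succ_iff.1 hν
  have hν' : ν ≤ 2 * n + 1 := by omega
  have hexp : 2 * n + 1 - ν = 1 + n + (n - ν) := by omega
  rw [bernsteinPolynomial, Nat.sub_sub_self hν', Nat.choose_symm hν', hexp]
  simp only [map_mul, map_pow, map_sub, map_one, map_natCast, aeval_X]
  ring

theorem norm_aeval_majorityPolynomial_le {z : ℂ} (hz : ‖z‖ ≤ ‖1 - z‖) (n : ℕ) :
    ‖aeval z (majorityPolynomial n)‖ ≤ ‖z‖ * ‖4 * z * (1 - z)‖ ^ n := by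
  rw [aeval_majorityPolynomial, norm_mul]
  gcongr
  have hchoose : ∑ ν ∈ Finset.range (n + 1), ((2 * n + 1).choose ν : ℝ) = 4 ^ n := by
    exact_mod_cast Nat.sum_range_choose_halfway n
  calc ‖∑ ν ∈ Finset.range (n + 1),
          ((2 * n + 1).choose ν : ℂ) * (z ^ n * (z ^ (n - ν) * (1 - z) ^ ν))‖
      ≤ ∑ ν ∈ Finset.range (n + 1), (2 * n + 1).choose ν * (‖z‖ ^ n * ‖1 - z‖ ^ n) := by
        refine norm_sum_le_of_le _ fun ν hν => ?_
        have hν : ν ≤ n := Finset.mem_range_succ_iff.1 hν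
        simp only [norm_mul, norm_pow, Complex.norm_natCast]
        rw [← Nat.sub_add_cancel hν, pow_add ‖1 - z‖, Nat.add_sub_cancel]
        gcongr
    _ = ‖4 * z * (1 - z)‖ ^ n := by
        rw [← Finset.sum_mul, hchoose]
        simp only [norm_mul, Complex.norm_ofNat, mul_pow, mul_assoc]

theorem norm_aeval_majorityPolynomial_sub_one_le {z : ℂ} (hz : ‖1 - z‖ ≤ ‖z‖) (n : ℕ) :
    ‖aeval z (majorityPolynomial n) - 1‖ ≤ ‖1 - z‖ * ‖4 * z * (1 - z)‖ ^ n := by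
  have hsymm : aeval z (majorityPolynomial n) - 1 = -aeval (1 - z) (majorityPolynomial n) := by
    have := congrArg (aeval z) (majorityPolynomial_add_comp_one_sub n)
    simp only [map_add, aeval_comp, map_sub, map_one, aeval_X] at this
    linear_combination this
  rw [hsymm, norm_neg]
  convert norm_aeval_majorityPolynomial_le (z := 1 - z) (by simpa using hz) n using 3
  ring_nf

theorem norm_one_sub_sq_le {d x : ℝ} (hx : |x| ∈ Icc d 1) (hd : 0 ≤ d) {z : ℂ}
    (hz : ‖z - x‖ ≤ d ^ 2 / 6) : ‖1 - z ^ 2‖ ≤ 1 - d ^ 2 / 2 := by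
  have hsq : x ^ 2 ∈ Icc (d ^ 2) 1 := by
    rw [← sq_abs x]
    exact ⟨pow_le_pow_left₀ hd hx.1 2, pow_le_one₀ (abs_nonneg x) hx.2⟩
  have hreal : ‖((1 - x ^ 2 : ℝ) : ℂ)‖ ≤ 1 - d ^ 2 := by
    rw [Complex.norm_real, Real.norm_of_nonneg (sub_nonneg.2 hsq.2)]
    linarith [hsq.1]
  have hsum : ‖2 * (x : ℂ) + (z - x)‖ ≤ 3 := by
    calc ‖2 * (x : ℂ) + (z - x)‖ ≤ 2 * |x| + ‖z - x‖ := by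
          simpa using norm_add_le (2 * (x : ℂ)) (z - x)
      _ ≤ 3 := by linarith [hx.2, hsq.1, hsq.2]
  calc ‖1 - z ^ 2‖
      = ‖((1 - x ^ 2 : ℝ) : ℂ) - (2 * x + (z - x)) * (z - x)‖ := by push_cast; ring_nf
    _ ≤ ‖((1 - x ^ 2 : ℝ) : ℂ)‖ + ‖2 * (x : ℂ) + (z - x)‖ * ‖z - x‖ := by
        rw [← norm_mul]
        exact norm_sub_le _ _
    _ ≤ (1 - d ^ 2) + 3 * (d ^ 2 / 6) := by gcongr
    _ = 1 - d ^ 2 / 2 := by ring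

theorem norm_one_add_le_norm_one_sub {w : ℂ} (hw : w.re ≤ 0) : ‖1 + w‖ ≤ ‖1 - w‖ := by
  rw [← sq_le_sq₀ (norm_nonneg _) (norm_nonneg _), Complex.sq_norm, Complex.sq_norm,
    Complex.normSq_apply, Complex.normSq_apply]
  simp only [Complex.add_re, Complex.sub_re, Complex.add_im, Complex.sub_im, Complex.one_re,
    Complex.one_im]
  linarith

/-- A polynomial close to the step function jumping from `0` to `1` at the origin: the majority
polynomial with its jump moved from `1/2` to `0` and `[0, 1]` rescaled to `[-1, 1]`. -/
noncomputable def stepPolynomial (n : ℕ) : ℝ[X] :=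
  (majorityPolynomial n).comp (C (1 / 2) * (1 + X))

theorem aeval_stepPolynomial (n : ℕ) (w : ℂ) :
    aeval w (stepPolynomial n) = aeval (1 / 2 * (1 + w)) (majorityPolynomial n) := by
  simp [stepPolynomial, aeval_comp]

theorem norm_aeval_stepPolynomial_le {w : ℂ} (hw : w.re ≤ 0) (n : ℕ) :
    ‖aeval w (stepPolynomial n)‖ ≤ ‖1 + w‖ / 2 * ‖1 - w ^ 2‖ ^ n := by
  have hside : ‖1 / 2 * (1 + w)‖ ≤ ‖1 - 1 / 2 * (1 + w)‖ := by
    rw [show 1 - 1 / 2 * (1 + w) = 1 / 2 * (1 - w) by ring, norm_mul, norm_mul]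
    gcongr
    exact norm_one_add_le_norm_one_sub hw
  rw [aeval_stepPolynomial]
  convert norm_aeval_majorityPolynomial_le hside n using 2
  · simp [div_eq_inv_mul]
  · ring_nf

theorem norm_aeval_stepPolynomial_sub_one_le {w : ℂ} (hw : 0 ≤ w.re) (n : ℕ) :
    ‖aeval w (stepPolynomial n) - 1‖ ≤ ‖1 - w‖ / 2 * ‖1 - w ^ 2‖ ^ n := by
  have hcompl : 1 - 1 / 2 * (1 + w) = 1 / 2 * (1 - w) := by ring
  have hside : ‖1 - 1 / 2 * (1 + w)‖ ≤ ‖1 / 2 * (1 + w)‖ := by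
    rw [hcompl, norm_mul, norm_mul]
    gcongr
    simpa [sub_eq_add_neg] using norm_one_add_le_norm_one_sub (w := -w) (by simpa using hw)
  rw [aeval_stepPolynomial]
  convert norm_aeval_majorityPolynomial_sub_one_le hside n using 2
  · rw [hcompl, norm_mul]
    simp [div_eq_inv_mul]
  · ring_nf

theorem exists_polynomial_near_step {d δ : ℝ} (hd : 0 < d) (hδ : 0 < δ) :
    ∃ A : ℝ[X], ∀ x : ℝ, |x| ∈ Icc d 1 → ∀ z : ℂ, ‖z - x‖ ≤ d ^ 2 / 6 →
      ‖aeval z A - (if 0 ≤ x then 1 else 0 : ℝ)‖ ≤ δ := by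
  obtain ⟨n, hn⟩ := exists_pow_lt_of_lt_one (half_pos hδ)
    (sub_lt_self 1 (half_pos (pow_pos hd 2)))
  refine ⟨stepPolynomial n, fun x hx z hz => ?_⟩
  have hdecay : ‖1 - z ^ 2‖ ^ n ≤ δ / 2 :=
    (pow_le_pow_left₀ (norm_nonneg _) (norm_one_sub_sq_le hx hd.le hz) n).trans hn.le
  have hd1 : d ≤ 1 := hx.1.trans hx.2
  have hzx : ‖z - x‖ ≤ d := by nlinarith
  have hre : |z.re - x| ≤ d := by simpa using (Complex.abs_re_le_norm (z - x)).trans hzx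
  have hz2 : ‖z‖ ≤ 2 := by
    have := norm_sub_norm_le z x
    rw [Complex.norm_real, Real.norm_eq_abs] at this
    linarith [hx.2]
  have hbound {w : ℂ} (hw : ‖w‖ ≤ 4) : ‖w‖ / 2 * ‖1 - z ^ 2‖ ^ n ≤ δ := by
    calc ‖w‖ / 2 * ‖1 - z ^ 2‖ ^ n ≤ 4 / 2 * (δ / 2) := by gcongr
      _ = δ := by ring
  split_ifs with h0
  · rw [abs_of_nonneg h0] at hx
    rw [Complex.ofReal_one]
    have hside : 0 ≤ z.re := by linarith [(abs_le.1 hre).1, hx.1]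
    refine (norm_aeval_stepPolynomial_sub_one_le hside n).trans (hbound ?_)
    linarith [norm_sub_le 1 z, norm_one (α := ℂ)]
  · rw [abs_of_neg (not_le.1 h0)] at hx
    rw [Complex.ofReal_zero, sub_zero]
    have hside : z.re ≤ 0 := by linarith [(abs_le.1 hre).2, hx.1]
    refine (norm_aeval_stepPolynomial_le hside n).trans (hbound ?_)
    linarith [norm_add_le 1 z, norm_one (α := ℂ)]

theorem exists_polynomial_near_weighted_steps {ι : Type*} (J : Finset ι) (s w : ι → ℝ) {d δ : ℝ}
    (hd : 0 < d) (hδ : 0 < δ) :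
    ∃ p : ℝ[X], ∀ t : ℝ, (∀ i ∈ J, |t - s i| ∈ Icc d 1) → ∀ z : ℂ, ‖z - t‖ ≤ d ^ 2 / 6 →
      ‖aeval z p - (∑ i ∈ J, w i * if s i ≤ t then 1 else 0 : ℝ)‖ ≤ δ := by
  set W : ℝ := ∑ i ∈ J, |w i|
  have hW : 0 < W + 1 :=
    add_pos_of_nonneg_of_pos (Finset.sum_nonneg fun i _ => abs_nonneg (w i)) one_pos
  obtain ⟨A, hA⟩ := exists_polynomial_near_step hd (div_pos hδ hW)
  refine ⟨∑ i ∈ J, C (w i) * A.comp (X - C (s i)), fun t ht z hz => ?_⟩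
  have hstep : ∀ i ∈ J,
      ‖aeval (z - s i) A - (if s i ≤ t then 1 else 0 : ℝ)‖ ≤ δ / (W + 1) := by
    intro i hi
    simpa only [sub_nonneg] using hA (t - s i) (ht i hi) (z - s i) (by simpa using hz)
  have hsum : aeval z (∑ i ∈ J, C (w i) * A.comp (X - C (s i))) -
        (∑ i ∈ J, w i * if s i ≤ t then 1 else 0 : ℝ) =
      ∑ i ∈ J, (w i : ℂ) * (aeval (z - s i) A - (if s i ≤ t then 1 else 0 : ℝ)) := by
    simp only [map_sum, map_mul, aeval_C, aeval_comp, map_sub, aeval_X, Complex.coe_algebraMap,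
      Complex.ofReal_sum, Complex.ofReal_mul, mul_sub, Finset.sum_sub_distrib]
  calc _ ≤ ∑ i ∈ J, |w i| * (δ / (W + 1)) := by
        rw [hsum]
        refine norm_sum_le_of_le _ fun i hi => ?_
        rw [norm_mul, Complex.norm_real, Real.norm_eq_abs]
        gcongr
        exact hstep i hi
    _ = W / (W + 1) * δ := by rw [← Finset.sum_mul]; ring
    _ ≤ δ := mul_le_of_le_one_left hδ.le ((div_le_one hW).2 (lt_add_one W).le)

theorem sum_uniform_steps_eq_floor {m : ℕ} (hm : 0 < m) {t : ℝ} (ht : t ≤ 1) :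
    ∑ i ∈ Finset.range m, (1 / m : ℝ) * (if ((i + 1 : ℝ) / m) ≤ t then 1 else 0) =
      ⌊m * t⌋₊ / m := by
  have hm' : (0 : ℝ) < m := Nat.cast_pos.2 hm
  have hfilter : (Finset.range m).filter (fun i : ℕ => ((i + 1 : ℝ) / m) ≤ t) =
      Finset.range ⌊m * t⌋₊ := by
    have hfloor : ⌊m * t⌋₊ ≤ m := Nat.floor_le_of_le (mul_le_of_le_one_right hm'.le ht)
    ext i
    rw [Finset.mem_filter, Finset.mem_range, Finset.mem_range, div_le_iff₀' hm', ← Nat.cast_succ,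
      ← Nat.le_floor_iff' i.succ_ne_zero]
    omega
  rw [← Finset.mul_sum, Finset.sum_boole, hfilter, Finset.card_range]
  ring

theorem exists_polynomial_near_staircase {m : ℕ} (hm : 0 < m) {d δ : ℝ} (hd : 0 < d)
    (hδ : 0 < δ) :
    ∃ p : ℝ[X], ∀ t ∈ Icc (0 : ℝ) 1, (∀ i ∈ Finset.range m, d ≤ |t - (i + 1) / m|) →
      ∀ z : ℂ, ‖z - t‖ ≤ d ^ 2 / 6 → ‖aeval z p - (⌊m * t⌋₊ / m : ℝ)‖ ≤ δ := by
  obtain ⟨p, hp⟩ := exists_polynomial_near_weighted_steps (Finset.range m)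
    (fun i => (i + 1 : ℝ) / m) (fun _ => 1 / m) hd hδ
  refine ⟨p, fun t ht hjump z hz => ?_⟩
  rw [← sum_uniform_steps_eq_floor hm ht.2]
  refine hp t (fun i hi => ⟨hjump i hi, ?_⟩) z hz
  have hi : (i + 1 : ℝ) ≤ m := by exact_mod_cast Finset.mem_range.1 hi
  have hs : (i + 1 : ℝ) / m ∈ Icc (0 : ℝ) 1 :=
    ⟨by positivity, div_le_one_of_le₀ hi (Nat.cast_nonneg m)⟩
  simpa using abs_sub_le_of_le_of_le ht.1 ht.2 hs.1 hs.2

theorem abs_floor_mul_div_sub_le {m : ℕ} (hm : 0 < m) {t : ℝ} (ht : 0 ≤ t) :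
    |⌊m * t⌋₊ / m - t| ≤ 1 / m := by
  have hm' : (0 : ℝ) < m := Nat.cast_pos.2 hm
  have hlow := Nat.floor_le (mul_nonneg hm'.le ht)
  have hupp := Nat.lt_floor_add_one (m * t)
  rw [← mul_div_cancel_left₀ t hm'.ne', ← sub_div, abs_div, abs_of_pos hm',
    mul_div_cancel_left₀ t hm'.ne']
  gcongr
  exact abs_le.2 ⟨by linarith, by linarith⟩

theorem exists_caloricExtension_near_time {m : ℕ} (hm : 0 < m) {d η : ℝ} (hd : 0 < d)
    (hη : 0 < η) :
    ∃ p : ℝ[X], ∀ x t : ℝ, |x| ≤ 1 → t ∈ Icc 0 1 →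
      (∀ i ∈ Finset.range m, d ≤ |t - (i + 1) / m|) →
      |caloricExtension p (x, t) - t| ≤ η + 1 / m := by
  set r : ℝ := d ^ 2 / 6
  have hr : 0 < r := by positivity
  obtain ⟨p, hp⟩ := exists_polynomial_near_staircase hm hd
    (δ := η * Real.exp (-(1 / r))) (by positivity)
  refine ⟨p, fun x t hx ht hjump => (abs_sub_le _ (⌊m * t⌋₊ / m : ℝ) _).trans
    (add_le_add ?_ (abs_floor_mul_div_sub_le hm ht.1))⟩
  calc |caloricExtension p (x, t) - ⌊m * t⌋₊ / m|
      ≤ η * Real.exp (-(1 / r)) * Real.exp (x ^ 2 / r) :=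
        abs_caloricExtension_sub_le hr (hp t ht hjump) x
    _ ≤ η * Real.exp (-(1 / r)) * Real.exp (1 / r) := by
        gcongr
        exact (sq_le_one_iff_abs_le_one x).2 hx
    _ = η := by rw [mul_assoc, ← Real.exp_add, neg_add_cancel, Real.exp_zero, mul_one]

end

theorem ofReal_le_volume_Icc_away_from {ι : Type*} (J : Finset ι) (s : ι → ℝ) (a b : ℝ) {d : ℝ}
    (hd : 0 ≤ d) :
    ENNReal.ofReal (b - a - J.card * (2 * d)) ≤
      volume {t ∈ Icc a b | ∀ i ∈ J, d ≤ |t - s i|} := by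
  have hset : {t ∈ Icc a b | ∀ i ∈ J, d ≤ |t - s i|} =
      Icc a b \ ⋃ i ∈ J, Metric.ball (s i) d := by
    ext t
    simp [Real.dist_eq]
  have hballs : volume (⋃ i ∈ J, Metric.ball (s i) d) ≤ ENNReal.ofReal (J.card * (2 * d)) := by
    refine (measure_biUnion_finset_le _ _).trans (le_of_eq ?_)
    simp [Real.volume_ball, ENNReal.ofReal_mul]
  calc ENNReal.ofReal (b - a - J.card * (2 * d))
      = volume (Icc a b) - ENNReal.ofReal (J.card * (2 * d)) := by
        rw [Real.volume_Icc, ENNReal.ofReal_sub _ (by positivity)]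
    _ ≤ volume (Icc a b) - volume (⋃ i ∈ J, Metric.ball (s i) d) := tsub_le_tsub_left hballs _
    _ ≤ volume {t ∈ Icc a b | ∀ i ∈ J, d ≤ |t - s i|} := hset ▸ le_measure_sdiff

/-- failure of uniform sublevel set estimates for the heat operator. For
each `ε ∈ (0,1)` there is a smooth `u : ℝ² → ℝ` with `Hu ≡ 1` on the unit square `[0,1]²`
and `|{(x,t) ∈ [0,1]² : |u(x,t)| ≤ ε}| ≥ 1 − ε`. -/
theorem heat_no_uniform_sublevel (ε : ℝ) (hε : ε ∈ Set.Ioo (0 : ℝ) 1) :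
    ∃ u : ℝ × ℝ → ℝ, ContDiff ℝ (⊤ : ℕ∞) u ∧
      (∀ z ∈ (Set.Icc (0 : ℝ) 1) ×ˢ (Set.Icc (0 : ℝ) 1), heatOp1 u z = 1) ∧
      ENNReal.ofReal (1 - ε) ≤
        volume {z ∈ (Set.Icc (0 : ℝ) 1) ×ˢ (Set.Icc (0 : ℝ) 1) | |u z| ≤ ε} := by
  obtain ⟨m, hm⟩ := exists_nat_gt (2 / ε)
  have hε0 : 0 < ε := hε.1
  have hm0 : (0 : ℝ) < m := (div_pos two_pos hε0).trans hm
  have hd : 0 < ε / (2 * m) := by positivity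
  have hmesh : 1 / (m : ℝ) ≤ ε / 2 := by simpa using one_div_le_one_div_of_le (by positivity) hm.le
  obtain ⟨p, hp⟩ := exists_caloricExtension_near_time (Nat.cast_pos.1 hm0) hd (half_pos hε0)
  refine ⟨fun z => caloricExtension p z - z.2, (contDiff_caloricExtension p).sub contDiff_snd,
    fun z _ => heatOp1_caloricExtension_sub_snd p z, ?_⟩
  set T := {t ∈ Icc (0 : ℝ) 1 | ∀ i ∈ Finset.range m, ε / (2 * m) ≤ |t - (i + 1) / m|}
  calc ENNReal.ofReal (1 - ε)
      = ENNReal.ofReal (1 - 0 - (Finset.range m).card * (2 * (ε / (2 * m)))) := by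
        rw [Finset.card_range, sub_zero]
        field_simp
    _ ≤ volume T := ofReal_le_volume_Icc_away_from _ _ _ _ hd.le
    _ = volume (Icc (0 : ℝ) 1 ×ˢ T) := by simp [Measure.volume_eq_prod]
    _ ≤ volume {z ∈ Icc (0 : ℝ) 1 ×ˢ Icc (0 : ℝ) 1 | |caloricExtension p z - z.2| ≤ ε} :=
        measure_mono fun z ⟨hx, ht, hjump⟩ => ⟨⟨hx, ht⟩, (hp z.1 z.2
          (abs_le.2 ⟨by linarith [hx.1], hx.2⟩) ht hjump).trans (by linarith)⟩
end

section
/- Let Ω ⊆ ℝⁿ be open, let u be smooth on Ω, and suppose the closed ball of radius R centred at x is contained in Ω. Define φ : [0,R] → ℝ by φ(0) = u(x) and φ(r) = (1/|B_r|) ∫_{B_r(x)} u(y) dy for 0 < r ≤ R, where B_r(x) is the open Euclidean ball of radius r centred at x and |B_r| its Lebesgue measure. Then φ is continuous on [0,R], and for every r ∈ (0,R), φ'(r) = (1/|B_r|) ∫_{B_r(x)} ((r² − |x−y|²)/(2r)) Δu(y) dy. -/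
open MeasureTheory Metric Set ENNReal

/-- The Laplacian `Δu = Σᵢ ∂²u/∂xᵢ²` of a function `u : ℝⁿ → ℝ`. -/
noncomputable def laplacian {n : ℕ} (u : EuclideanSpace ℝ (Fin n) → ℝ)
    (x : EuclideanSpace ℝ (Fin n)) : ℝ :=
  ∑ i : Fin n,
    fderiv ℝ (fun y => fderiv ℝ u y (EuclideanSpace.single i 1)) x (EuclideanSpace.single i 1)

/-!
Rescaling to the unit ball turns `φ(r)` into the average of `z ↦ u(x + r z)` over `B₁(0)`, which
also has the right value at `r = 0`. Continuity follows by dominated convergence, and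
differentiating under the integral sign gives `φ'(r)` as `1 / r` times the average over `B_r(x)` of
`Du(y)(y - x)`. Since `y - x` is minus the gradient of `(r² - |x - y|²) / 2`, which vanishes on the
sphere, integrating by parts without boundary term replaces `Du(y)(y - x)` by
`(r² - |x - y|²) / 2 · Δu(y)`.
-/

open scoped Laplacian RealInnerProductSpace Topology

section Laplacian

variable {E F ι : Type*} [NormedAddCommGroup E] [InnerProductSpace ℝ E] [FiniteDimensional ℝ E]
  [NormedAddCommGroup F] [NormedSpace ℝ F] [Fintype ι] {u : E → F} {x : E}

lemma laplacian_eq_sum_fderiv_fderiv (b : OrthonormalBasis ι ℝ E) (hu : ContDiffAt ℝ 2 u x) :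
    Δ u x = ∑ i, fderiv ℝ (fun y => fderiv ℝ u y (b i)) x (b i) := by
  have hu' : DifferentiableAt ℝ (fderiv ℝ u) x :=
    (hu.fderiv_right (m := 1) (by norm_num)).differentiableAt (by norm_num)
  simp [InnerProductSpace.laplacian_eq_iteratedFDeriv_orthonormalBasis u b,
    iteratedFDeriv_two_apply, fderiv_clm_apply hu' (differentiableAt_const _)]

lemma laplacian_euclideanSpace {n : ℕ} {u : EuclideanSpace ℝ (Fin n) → ℝ}
    {x : EuclideanSpace ℝ (Fin n)} (hu : ContDiffAt ℝ 2 u x) : laplacian u x = Δ u x := by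
  simp [laplacian_eq_sum_fderiv_fderiv (EuclideanSpace.basisFun (Fin n) ℝ) hu, laplacian]

end Laplacian

section ParaboloidCap

variable {E : Type*} [NormedAddCommGroup E] {x y : E} {r : ℝ}

/-- The function `(r² - |y - x|²) / 2` on the ball of radius `r` centred at `x`, extended by zero.
It is the weight against which one integrates by parts on the ball. Truncating the norm rather than
the value keeps Lipschitz continuity on the whole space visible. -/
noncomputable def paraboloidCap (x : E) (r : ℝ) (y : E) : ℝ :=
  (r ^ 2 - (min r ‖y - x‖) ^ 2) / 2

lemma paraboloidCap_of_mem_ball (hy : y ∈ ball x r) :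
    paraboloidCap x r y = (r ^ 2 - ‖y - x‖ ^ 2) / 2 := by
  rw [paraboloidCap, min_eq_right (mem_ball_iff_norm.1 hy).le]

lemma paraboloidCap_of_notMem_ball (hy : y ∉ ball x r) : paraboloidCap x r y = 0 := by
  rw [mem_ball_iff_norm, not_lt] at hy
  rw [paraboloidCap, min_eq_left hy, sub_self, zero_div]

lemma lipschitzWith_paraboloidCap (x : E) (hr : 0 ≤ r) :
    LipschitzWith r.toNNReal (paraboloidCap x r) := by
  refine LipschitzWith.of_dist_le_mul fun y z => ?_
  set a := min r ‖y - x‖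
  set b := min r ‖z - x‖
  have hab_nonneg : 0 ≤ (a + b) / 2 :=
    div_nonneg (add_nonneg (le_min hr (norm_nonneg _)) (le_min hr (norm_nonneg _))) two_pos.le
  have hab : (a + b) / 2 ≤ r := by linarith [min_le_left r ‖y - x‖, min_le_left r ‖z - x‖]
  have hdist : |b - a| ≤ dist y z := calc
    |b - a| ≤ |‖z - x‖ - ‖y - x‖| := by
      simpa using abs_min_sub_min_le_max r ‖z - x‖ r ‖y - x‖
    _ ≤ ‖(z - x) - (y - x)‖ := abs_norm_sub_norm_le _ _
    _ = dist y z := by rw [sub_sub_sub_cancel_right, dist_eq_norm']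
  rw [Real.coe_toNNReal r hr, Real.dist_eq]
  calc |(r ^ 2 - a ^ 2) / 2 - (r ^ 2 - b ^ 2) / 2|
      = (a + b) / 2 * |b - a| := by
        rw [← abs_of_nonneg hab_nonneg, ← abs_mul]
        ring_nf
    _ ≤ r * dist y z := by gcongr

lemma hasCompactSupport_paraboloidCap [ProperSpace E] (x : E) (r : ℝ) :
    HasCompactSupport (paraboloidCap x r) :=
  .intro (isCompact_closedBall x r) fun _ hy =>
    paraboloidCap_of_notMem_ball fun h => hy (ball_subset_closedBall h)

lemma lineDeriv_paraboloidCap_of_notMem_closedBall [NormedSpace ℝ E] (hy : y ∉ closedBall x r)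
    (v : E) : lineDeriv ℝ (paraboloidCap x r) y v = 0 := by
  have h_zero : paraboloidCap x r =ᶠ[𝓝 y] fun _ => 0 := by
    filter_upwards [isClosed_closedBall.isOpen_compl.mem_nhds hy] with z hz
    exact paraboloidCap_of_notMem_ball fun h => hz (ball_subset_closedBall h)
  rw [h_zero.lineDeriv_eq, lineDeriv, deriv_const]

lemma lineDeriv_paraboloidCap_of_mem_ball [InnerProductSpace ℝ E] (hy : y ∈ ball x r) (v : E) :
    lineDeriv ℝ (paraboloidCap x r) y v = -⟪y - x, v⟫ := by
  have h_eq : paraboloidCap x r =ᶠ[𝓝 y] fun z => (r ^ 2 - ‖z - x‖ ^ 2) / 2 := by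
    filter_upwards [isOpen_ball.mem_nhds hy] with z hz using paraboloidCap_of_mem_ball hz
  have h_deriv : HasFDerivAt (fun z => (r ^ 2 - ‖z - x‖ ^ 2) / 2) (-innerSL ℝ (y - x)) y := by
    simp only [div_eq_inv_mul]
    refine ((((hasFDerivAt_id y).sub_const x).norm_sq.const_sub (r ^ 2)).const_mul
      2⁻¹).congr_fderiv ?_
    ext w
    simp
  rw [h_eq.lineDeriv_eq, (h_deriv.hasLineDerivAt v).lineDeriv, neg_apply,
    innerSL_apply_apply]

end ParaboloidCap

lemma integrableOn_ball_of_continuousOn_closedBall {E F : Type*} [MetricSpace E]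
    [ProperSpace E] [MeasurableSpace E] [OpensMeasurableSpace E] [NormedAddCommGroup F]
    {μ : Measure E} [IsFiniteMeasureOnCompacts μ] {x : E} {r : ℝ} {f : E → F}
    (hf : ContinuousOn f (closedBall x r)) : IntegrableOn f (ball x r) μ :=
  (hf.integrableOn_compact (isCompact_closedBall x r)).mono_set ball_subset_closedBall

section IntegrationByParts

variable {E F : Type*} [NormedAddCommGroup E] [InnerProductSpace ℝ E] [FiniteDimensional ℝ E]
  [MeasurableSpace E] [BorelSpace E] [NormedAddCommGroup F] [NormedSpace ℝ F] [CompleteSpace F]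
  {μ : Measure E} [μ.IsAddHaarMeasure] {Ω : Set E} {x : E} {r : ℝ}

lemma integral_ball_inner_mul {C : NNReal} {f : E → ℝ} (hr : 0 < r)
    (hf : LipschitzOnWith C f (ball x r)) (v : E) :
    ∫ y in ball x r, ⟪y - x, v⟫ * f y ∂μ =
      ∫ y in ball x r, (r ^ 2 - ‖y - x‖ ^ 2) / 2 * lineDeriv ℝ f y v ∂μ := by
  obtain ⟨g, hg, hfg⟩ := hf.extend_real
  calc ∫ y in ball x r, ⟪y - x, v⟫ * f y ∂μ
      = ∫ y in ball x r, lineDeriv ℝ (paraboloidCap x r) y (-v) * g y ∂μ := by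
        refine setIntegral_congr_fun measurableSet_ball fun y hy => ?_
        simp only [lineDeriv_paraboloidCap_of_mem_ball hy, inner_neg_right, neg_neg, hfg hy]
    _ = ∫ y, lineDeriv ℝ (paraboloidCap x r) y (-v) * g y ∂μ := by
        refine setIntegral_eq_integral_of_ae_compl_eq_zero ?_
        have h_sphere : ∀ᵐ y ∂μ, y ∉ sphere x r :=
          measure_eq_zero_iff_ae_notMem.1 (Measure.addHaar_sphere_of_ne_zero μ x hr.ne')
        filter_upwards [h_sphere] with y hy_sphere hy_ball
        have hy : y ∉ closedBall x r := by
          rw [← ball_union_sphere]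
          exact fun h => h.elim hy_ball hy_sphere
        rw [lineDeriv_paraboloidCap_of_notMem_closedBall hy, zero_mul]
    _ = ∫ y, lineDeriv ℝ g y v * paraboloidCap x r y ∂μ :=
        (hg.integral_lineDeriv_mul_eq (lipschitzWith_paraboloidCap x hr.le)
          (hasCompactSupport_paraboloidCap x r) v).symm
    _ = ∫ y in ball x r, lineDeriv ℝ g y v * paraboloidCap x r y ∂μ :=
        (setIntegral_eq_integral_of_forall_compl_eq_zero fun y hy => by
          rw [paraboloidCap_of_notMem_ball hy, mul_zero]).symm
    _ = ∫ y in ball x r, (r ^ 2 - ‖y - x‖ ^ 2) / 2 * lineDeriv ℝ f y v ∂μ := by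
        refine setIntegral_congr_fun measurableSet_ball fun y hy => ?_
        have h_near : g =ᶠ[𝓝 y] f := (hfg.eventuallyEq_of_mem (isOpen_ball.mem_nhds hy)).symm
        simp only [paraboloidCap_of_mem_ball hy, h_near.lineDeriv_eq, mul_comm]

lemma integral_ball_inner_smul {f : E → F} (hr : 0 < r) (hΩ : IsOpen Ω)
    (hball : closedBall x r ⊆ Ω) (hf : ContDiffOn ℝ 1 f Ω) (v : E) :
    ∫ y in ball x r, ⟪y - x, v⟫ • f y ∂μ =
      ∫ y in ball x r, ((r ^ 2 - ‖y - x‖ ^ 2) / 2) • fderiv ℝ f y v ∂μ := by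
  have hf_cont : ContinuousOn f (closedBall x r) := hf.continuousOn.mono hball
  have hf'_cont : ContinuousOn (fderiv ℝ f) (closedBall x r) :=
    (hf.continuousOn_fderiv_of_isOpen hΩ (by norm_num)).mono hball
  refine (SeparatingDual.eq_iff_forall_dual_eq (R := ℝ)).2 fun L => ?_
  rw [← L.integral_comp_comm (integrableOn_ball_of_continuousOn_closedBall (by fun_prop)),
    ← L.integral_comp_comm (integrableOn_ball_of_continuousOn_closedBall (by fun_prop))]
  simp only [map_smul, smul_eq_mul]
  obtain ⟨C, hC⟩ := (L.contDiff.comp_contDiffOn (hf.mono hball)).exists_lipschitzOnWith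
    (by norm_num) (convex_closedBall x r) (isCompact_closedBall x r)
  refine (integral_ball_inner_mul hr (hC.mono ball_subset_closedBall) v).trans
    (setIntegral_congr_fun measurableSet_ball fun y hy => ?_)
  have hfy : DifferentiableAt ℝ f y := (hf.differentiableOn (by norm_num)).differentiableAt
    (hΩ.mem_nhds (hball (ball_subset_closedBall hy)))
  have h_line : HasLineDerivAt ℝ (L ∘ f) (L (fderiv ℝ f y v)) y v :=
    (L.hasFDerivAt.comp y hfy.hasFDerivAt).hasLineDerivAt v
  simp only [h_line.lineDeriv]

lemma integral_ball_fderiv_sub {u : E → F} (hr : 0 < r) (hΩ : IsOpen Ω)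
    (hball : closedBall x r ⊆ Ω) (hu : ContDiffOn ℝ 2 u Ω) :
    ∫ y in ball x r, fderiv ℝ u y (y - x) ∂μ =
      ∫ y in ball x r, ((r ^ 2 - ‖y - x‖ ^ 2) / 2) • Δ u y ∂μ := by
  let b := stdOrthonormalBasis ℝ E
  have hDu (i) : ContDiffOn ℝ 1 (fun y => fderiv ℝ u y (b i)) Ω :=
    (hu.fderiv_of_isOpen hΩ (by norm_num)).clm_apply contDiffOn_const
  have hDu_cont (i) : ContinuousOn (fun y => fderiv ℝ u y (b i)) (closedBall x r) :=
    (hDu i).continuousOn.mono hball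
  have hD2u_cont (i) :
      ContinuousOn (fderiv ℝ fun y => fderiv ℝ u y (b i)) (closedBall x r) :=
    ((hDu i).continuousOn_fderiv_of_isOpen hΩ (by norm_num)).mono hball
  calc ∫ y in ball x r, fderiv ℝ u y (y - x) ∂μ
      = ∫ y in ball x r, ∑ i, ⟪y - x, b i⟫ • fderiv ℝ u y (b i) ∂μ := by
        congr! with y
        conv_lhs => rw [← b.sum_repr' (y - x)]
        simp only [map_sum, map_smul, real_inner_comm]
    _ = ∑ i, ∫ y in ball x r, ⟪y - x, b i⟫ • fderiv ℝ u y (b i) ∂μ :=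
        integral_finsetSum _ fun i _ =>
          integrableOn_ball_of_continuousOn_closedBall (by fun_prop)
    _ = ∑ i, ∫ y in ball x r, ((r ^ 2 - ‖y - x‖ ^ 2) / 2) •
          fderiv ℝ (fun z => fderiv ℝ u z (b i)) y (b i) ∂μ :=
        Finset.sum_congr rfl fun i _ => integral_ball_inner_smul hr hΩ hball (hDu i) (b i)
    _ = ∫ y in ball x r, ∑ i, ((r ^ 2 - ‖y - x‖ ^ 2) / 2) •
          fderiv ℝ (fun z => fderiv ℝ u z (b i)) y (b i) ∂μ :=
        (integral_finsetSum _ fun i _ =>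
          integrableOn_ball_of_continuousOn_closedBall (by fun_prop)).symm
    _ = ∫ y in ball x r, ((r ^ 2 - ‖y - x‖ ^ 2) / 2) • Δ u y ∂μ := by
        refine setIntegral_congr_fun measurableSet_ball fun y hy => ?_
        have huy : ContDiffAt ℝ 2 u y :=
          hu.contDiffAt (hΩ.mem_nhds (hball (ball_subset_closedBall hy)))
        simp only [laplacian_eq_sum_fderiv_fderiv b huy, Finset.smul_sum]

end IntegrationByParts

section Rescaling

variable {E : Type*} [SeminormedAddCommGroup E] [NormedSpace ℝ E] {s ρ : ℝ}

lemma add_smul_mem_closedBall {z : E} (x : E) (hs : |s| ≤ ρ) (hz : z ∈ ball 0 1) :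
    x + s • z ∈ closedBall x ρ := by
  rw [mem_closedBall_iff_norm, add_sub_cancel_left, norm_smul, Real.norm_eq_abs]
  exact (mul_le_of_le_one_right (abs_nonneg s) (mem_ball_zero_iff.1 hz).le).trans hs

lemma continuousOn_comp_add_smul_unitBall {F : Type*} [TopologicalSpace F] {f : E → F} {x : E}
    (hf : ContinuousOn f (closedBall x ρ)) (hs : |s| ≤ ρ) :
    ContinuousOn (fun z => f (x + s • z)) (ball 0 1) :=
  hf.comp (by fun_prop) fun _ hz => add_smul_mem_closedBall x hs hz

end Rescaling

section BallAverage

variable {E F : Type*} [NormedAddCommGroup E] [NormedSpace ℝ E] [FiniteDimensional ℝ E]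
  [MeasurableSpace E] [BorelSpace E] [NormedAddCommGroup F] [NormedSpace ℝ F]
  {μ : Measure E} [μ.IsAddHaarMeasure] {u : E → F} {x : E} {r R : ℝ}

lemma setAverage_ball_eq_setAverage_unitBall (f : E → F) (x : E) (hr : 0 < r) :
    ⨍ y in ball x r, f y ∂μ = ⨍ z in ball 0 1, f (x + r • z) ∂μ := by
  have h_translate : ∫ y in ball x r, f y ∂μ = ∫ y in ball 0 r, f (x + y) ∂μ := by
    rw [← (measurePreserving_add_left μ x).setIntegral_preimage_emb
      (measurableEmbedding_addLeft x) f (ball x r), preimage_add_ball, sub_self]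
  have h_dilate : ∫ z in ball 0 1, f (x + r • z) ∂μ =
      (r ^ Module.finrank ℝ E)⁻¹ • ∫ y in ball 0 r, f (x + y) ∂μ := by
    rw [Measure.setIntegral_comp_smul_of_pos μ (fun y => f (x + y)) _ hr,
      smul_unitBall_of_pos hr]
  have h_volume : μ.real (ball x r) = r ^ Module.finrank ℝ E * μ.real (ball 0 1) := by
    rw [Measure.real, Measure.addHaar_ball_of_pos μ x hr, ENNReal.toReal_mul,
      ENNReal.toReal_ofReal (by positivity), Measure.real]
  rw [setAverage_eq, setAverage_eq, h_translate, h_dilate, h_volume, smul_smul, mul_inv_rev]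

lemma continuousOn_setAverage_unitBall (hu : ContinuousOn u (closedBall x R)) :
    ContinuousOn (fun s : ℝ => ⨍ z in ball 0 1, u (x + s • z) ∂μ) (closedBall 0 R) := by
  simp only [setAverage_eq]
  obtain ⟨C, hC⟩ := (isCompact_closedBall x R).exists_bound_of_continuousOn hu
  refine continuousOn_const.smul (continuousOn_of_dominated (bound := fun _ => C)
    (fun s hs => ?_) (fun s hs => ?_) (integrableOn_const measure_ball_lt_top.ne) ?_)
  · exact (continuousOn_comp_add_smul_unitBall hu (by simpa using hs)).aestronglyMeasurable
      measurableSet_ball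
  · filter_upwards [ae_restrict_mem measurableSet_ball] with z hz
    exact hC _ (add_smul_mem_closedBall x (by simpa using hs) hz)
  · filter_upwards [ae_restrict_mem measurableSet_ball] with z hz
    have h_line : Continuous fun s : ℝ => x + s • z := by fun_prop
    exact hu.comp h_line.continuousOn fun s hs =>
      add_smul_mem_closedBall x (by simpa using hs) hz

lemma hasDerivAt_setAverage_unitBall (hu : ContDiffOn ℝ 1 u (ball x R)) (hr : |r| < R) :
    HasDerivAt (fun s => ⨍ z in ball 0 1, u (x + s • z) ∂μ)
      (⨍ z in ball 0 1, fderiv ℝ u (x + r • z) z ∂μ) r := by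
  obtain ⟨ρ, hrρ, hρR⟩ := exists_between hr
  have hsub : closedBall x ρ ⊆ ball x R := closedBall_subset_ball hρR
  have hu_cont : ContinuousOn u (closedBall x ρ) := hu.continuousOn.mono hsub
  have hu'_cont : ContinuousOn (fderiv ℝ u) (closedBall x ρ) :=
    (hu.continuousOn_fderiv_of_isOpen isOpen_ball (by norm_num)).mono hsub
  obtain ⟨C, hC⟩ := (isCompact_closedBall x ρ).exists_bound_of_continuousOn hu'_cont
  have h_nhds : {s : ℝ | |s| < ρ} ∈ 𝓝 r := (isOpen_lt continuous_abs continuous_const).mem_nhds hrρ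
  have h_meas {s : ℝ} (hs : |s| < ρ) :
      AEStronglyMeasurable (fun z => u (x + s • z)) (μ.restrict (ball 0 1)) :=
    (continuousOn_comp_add_smul_unitBall hu_cont hs.le).aestronglyMeasurable measurableSet_ball
  simp only [setAverage_eq]
  suffices h_deriv : HasDerivAt (fun s => ∫ z in ball 0 1, u (x + s • z) ∂μ)
      (∫ z in ball 0 1, fderiv ℝ u (x + r • z) z ∂μ) r from h_deriv.const_smul _
  refine (hasDerivAt_integral_of_dominated_loc_of_deriv_le (bound := fun _ => C)
    (F' := fun s z => fderiv ℝ u (x + s • z) z) h_nhds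
    (Filter.eventually_of_mem h_nhds fun s hs => h_meas hs) ?_ ?_ ?_
    (integrableOn_const measure_ball_lt_top.ne) ?_).2
  · obtain ⟨M, hM⟩ := (isCompact_closedBall x ρ).exists_bound_of_continuousOn hu_cont
    refine IntegrableOn.of_bound measure_ball_lt_top (h_meas hrρ) M ?_
    filter_upwards [ae_restrict_mem measurableSet_ball] with z hz
    exact hM _ (add_smul_mem_closedBall x hrρ.le hz)
  · exact ((continuousOn_comp_add_smul_unitBall hu'_cont hrρ.le).clm_apply
      continuousOn_id).aestronglyMeasurable measurableSet_ball
  · filter_upwards [ae_restrict_mem measurableSet_ball] with z hz s hs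
    calc ‖fderiv ℝ u (x + s • z) z‖
        ≤ ‖fderiv ℝ u (x + s • z)‖ :=
          ContinuousLinearMap.unit_le_opNorm _ _ (mem_ball_zero_iff.1 hz).le
      _ ≤ C := hC _ (add_smul_mem_closedBall x (le_of_lt hs) hz)
  · filter_upwards [ae_restrict_mem measurableSet_ball] with z hz s hs
    have h_mem : x + s • z ∈ ball x R := hsub (add_smul_mem_closedBall x (le_of_lt hs) hz)
    have h_line : HasDerivAt (fun t : ℝ => x + t • z) z s := by
      simpa using ((hasDerivAt_id s).smul_const z).const_add x
    exact ((hu.differentiableOn (by norm_num)).differentiableAt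
      (isOpen_ball.mem_nhds h_mem)).hasFDerivAt.comp_hasDerivAt s h_line

end BallAverage

section Main

variable {E F : Type*} [NormedAddCommGroup E] [InnerProductSpace ℝ E] [FiniteDimensional ℝ E]
  [MeasurableSpace E] [BorelSpace E] [NormedAddCommGroup F] [NormedSpace ℝ F] [CompleteSpace F]
  {μ : Measure E} [μ.IsAddHaarMeasure] {u : E → F} {x : E} {R : ℝ}

lemma setAverage_unitBall_fderiv {r : ℝ} {Ω : Set E} (hr : 0 < r) (hΩ : IsOpen Ω)
    (hball : closedBall x r ⊆ Ω) (hu : ContDiffOn ℝ 2 u Ω) :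
    ⨍ z in ball 0 1, fderiv ℝ u (x + r • z) z ∂μ =
      ⨍ y in ball x r, ((r ^ 2 - ‖x - y‖ ^ 2) / (2 * r)) • Δ u y ∂μ := calc
  ⨍ z in ball 0 1, fderiv ℝ u (x + r • z) z ∂μ
    = ⨍ y in ball x r, r⁻¹ • fderiv ℝ u y (y - x) ∂μ := by
      simp [setAverage_ball_eq_setAverage_unitBall _ x hr, inv_smul_smul₀ hr.ne']
  _ = ⨍ y in ball x r, r⁻¹ • ((r ^ 2 - ‖y - x‖ ^ 2) / 2) • Δ u y ∂μ := by
      simp only [setAverage_eq, integral_smul, integral_ball_fderiv_sub hr hΩ hball hu]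
  _ = ⨍ y in ball x r, ((r ^ 2 - ‖x - y‖ ^ 2) / (2 * r)) • Δ u y ∂μ := by
      congr! 2 with y
      rw [smul_smul, norm_sub_rev, inv_mul_eq_div, div_div]

theorem ball_average_deriv_general (hu_cont : ContinuousOn u (closedBall x R))
    (hu : ContDiffOn ℝ 2 u (ball x R)) {φ : ℝ → F} (hφ_zero : φ 0 = u x)
    (hφ : ∀ r ∈ Ioc 0 R, φ r = ⨍ y in ball x r, u y ∂μ) :
    ContinuousOn φ (Icc 0 R) ∧
      ∀ r ∈ Ioo 0 R,
        HasDerivAt φ (⨍ y in ball x r, ((r ^ 2 - ‖x - y‖ ^ 2) / (2 * r)) • Δ u y ∂μ) r := by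
  have h_eqOn : EqOn φ (fun s => ⨍ z in ball 0 1, u (x + s • z) ∂μ) (Icc 0 R) := by
    rintro r ⟨hr₀, hrR⟩
    rcases hr₀.eq_or_lt with rfl | hr₀
    · simp [hφ_zero, setAverage_const (measure_ball_pos μ _ one_pos).ne' measure_ball_lt_top.ne]
    · exact (hφ r ⟨hr₀, hrR⟩).trans (setAverage_ball_eq_setAverage_unitBall u x hr₀)
  refine ⟨((continuousOn_setAverage_unitBall hu_cont).mono fun r hr => ?_).congr h_eqOn,
    fun r hr => ?_⟩
  · simpa [abs_of_nonneg hr.1] using hr.2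
  · rw [← setAverage_unitBall_fderiv hr.1 isOpen_ball (closedBall_subset_ball hr.2) hu]
    refine (hasDerivAt_setAverage_unitBall (hu.of_le (by norm_num)) ?_).congr_of_eventuallyEq
      (h_eqOn.eventuallyEq_of_mem (Icc_mem_nhds hr.1 hr.2))
    rw [abs_of_pos hr.1]
    exact hr.2

end Main

/-- derivative formula for ball averages. Let `u` be smooth on an open
`Ω ⊆ ℝⁿ` containing the closed ball of radius `R` centred at `x`, and let
`φ(0) = u(x)`, `φ(r) = (1/|B_r|) ∫_{B_r(x)} u` for `0 < r`. Then `φ` is continuous on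
`[0,R]` and for `r ∈ (0,R)`,
`φ'(r) = (1/|B_r|) ∫_{B_r(x)} ((r² − |x−y|²)/(2r)) Δu(y) dy`. -/
theorem ball_average_deriv (n : ℕ) (Ω : Set (EuclideanSpace ℝ (Fin n))) (hΩ : IsOpen Ω)
    (u : EuclideanSpace ℝ (Fin n) → ℝ) (hu : ContDiffOn ℝ (⊤ : ℕ∞) u Ω)
    (x : EuclideanSpace ℝ (Fin n)) (R : ℝ) (hR : 0 < R) (hball : closedBall x R ⊆ Ω)
    (φ : ℝ → ℝ)
    (hφ : ∀ r : ℝ, φ r =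
      if r = 0 then u x else ((volume (ball x r)).toReal)⁻¹ * ∫ y in ball x r, u y) :
    ContinuousOn φ (Icc 0 R) ∧
      ∀ r ∈ Ioo 0 R,
        HasDerivAt φ
          (((volume (ball x r)).toReal)⁻¹ *
            ∫ y in ball x r, ((r ^ 2 - ‖x - y‖ ^ 2) / (2 * r)) * laplacian u y) r := by
  have hu₂ : ContDiffOn ℝ 2 u Ω := hu.of_le (by norm_cast)
  have h_general := ball_average_deriv_general (μ := volume) (hu.continuousOn.mono hball)
    (hu₂.mono (ball_subset_closedBall.trans hball)) (φ := φ) (by simp [hφ]) fun r hr => by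
      rw [hφ, if_neg hr.1.ne', setAverage_eq, Measure.real, smul_eq_mul]
  refine h_general.imp_right fun h_deriv r hr => (h_deriv r hr).congr_deriv ?_
  rw [setAverage_eq]
  refine congrArg _ (setIntegral_congr_fun measurableSet_ball fun y hy => ?_)
  have hyΩ : y ∈ Ω := hball (ball_subset_closedBall (ball_subset_ball hr.2.le hy))
  simp only [laplacian_euclideanSpace (hu₂.contDiffAt (hΩ.mem_nhds hyΩ)), smul_eq_mul]
end
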